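/- For all x, y, z ∈ 𝓡, (x ⊕ y) ⊕ z ∼ x ⊕ (y ⊕ z). -/

import Mathlib

/-- The ambient space `𝓡` of decimal representations: an integer part together
with a sequence of digits in `{0,…,9}`. -/
abbrev DecimalRep := ℤ × (ℕ → Fin 10)

namespace DecimalRep

open scoped Classical

/-- The truncation `[x]_k = x₀ + ∑_{i=1}^k x_i / 10^i` of `x` up to the `k`-th
digit, as a rational number. -/
def trunc (x : DecimalRep) (k : ℕ) : ℚ :=
  (x.1 : ℚ) + ∑ i ∈ Finset.range k, ((x.2 i : ℕ) : ℚ) / 10 ^ (i + 1)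

/-- The order `⪯` on `𝓡`: `x ⪯ y` iff every truncation of `x` is at most the
corresponding truncation of `y`. -/
def le (x y : DecimalRep) : Prop := ∀ k : ℕ, trunc x k ≤ trunc y k

/-- The strict order `≺` on `𝓡`. -/
def lt (x y : DecimalRep) : Prop := le x y ∧ x ≠ y

/-- Two decimal representations are equivalent ("have no gap") iff there is no
third element lying between them. -/
def equiv (x y : DecimalRep) : Prop :=
  ¬ ∃ z : DecimalRep, z ≠ x ∧ z ≠ y ∧
      ((le x z ∧ le z y) ∨ (le y z ∧ le z x))

/-- `𝓡₉`: decimal representations ending in an infinite string of nines. -/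
def allNines (x : DecimalRep) : Prop := ∃ N : ℕ, ∀ k ≥ N, x.2 k = 9

/-- `ℚ_F`: decimal representations ending in an infinite string of zeros. -/
def finiteDec (x : DecimalRep) : Prop := ∃ N : ℕ, ∀ k ≥ N, x.2 k = 0

/-- The decimal expansion map `ι : ℚ → 𝓡`, satisfying
`[ι(α)]_k = ⌊10^k·α⌋/10^k` for all `k`. -/
def iota (α : ℚ) : DecimalRep :=
  (⌊α⌋, fun k => ⟨(⌊α * 10 ^ (k + 1)⌋ % 10).toNat, by
    have h1 : (0 : ℤ) ≤ ⌊α * 10 ^ (k + 1)⌋ % 10 := Int.emod_nonneg _ (by norm_num)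
    have h2 : ⌊α * 10 ^ (k + 1)⌋ % 10 < 10 := Int.emod_lt_of_pos _ (by norm_num)
    omega⟩)

/-- `M` is a least upper bound of `W` in `(𝓡,⪯)`. -/
def IsLub (W : Set DecimalRep) (M : DecimalRep) : Prop :=
  (∀ w ∈ W, le w M) ∧ ∀ M' : DecimalRep, (∀ w ∈ W, le w M') → le M M'

/-- `M` is a greatest lower bound of `W` in `(𝓡,⪯)`. -/
def IsGlb (W : Set DecimalRep) (M : DecimalRep) : Prop :=
  (∀ w ∈ W, le M w) ∧ ∀ M' : DecimalRep, (∀ w ∈ W, le M' w) → le M' M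

/-- The least upper bound of a set in `(𝓡,⪯)` (junk value if none exists). -/
noncomputable def sup (W : Set DecimalRep) : DecimalRep :=
  if h : ∃ M, IsLub W M then h.choose else default

/-- The greatest lower bound of a set in `(𝓡,⪯)` (junk value if none exists). -/
noncomputable def inf (W : Set DecimalRep) : DecimalRep :=
  if h : ∃ M, IsGlb W M then h.choose else default

/-- Addition `x ⊕ y := sup {ι([x]_k + [y]_k) : k ∈ ℕ}` on `𝓡`. -/
noncomputable def add (x y : DecimalRep) : DecimalRep :=
  sup { z | ∃ k : ℕ, z = iota (trunc x k + trunc y k) }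

/-- The "additive inverse" map `Ψ(x₀.x₁x₂⋯) = (−1−x₀).(9−x₁)(9−x₂)⋯`. -/
def psi (x : DecimalRep) : DecimalRep :=
  (-1 - x.1, fun k => ⟨9 - (x.2 k).val, by have := (x.2 k).isLt; omega⟩)

/-- The signal map: `0` on the nonnegative part, `1` on the negative part. -/
noncomputable def sign (x : DecimalRep) : ℕ :=
  if le (iota 0) x then 0 else 1

/-- The absolute value `‖x‖ := max {x, Ψ(x)}` with respect to `⪯`. -/
noncomputable def norm (x : DecimalRep) : DecimalRep :=
  if le x (psi x) then psi x else x

/-- Multiplication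
`x ⊗ y := Ψ^(sign x + sign y) (sup {ι([‖x‖]_k · [‖y‖]_k) : k ∈ ℕ})` on `𝓡`. -/
noncomputable def mul (x y : DecimalRep) : DecimalRep :=
  psi^[sign x + sign y]
    (sup { z | ∃ k : ℕ, z = iota (trunc (norm x) k * trunc (norm y) k) })

/-- The multiplicative inverse
`x⁻¹ := Ψ^(sign x) (inf {ι(1/[‖x‖]_k) : k ∈ ℕ, [‖x‖]_k > 0})`. -/
noncomputable def inv (x : DecimalRep) : DecimalRep :=
  psi^[sign x]
    (inf { z | ∃ k : ℕ, 0 < trunc (norm x) k ∧ z = iota (1 / trunc (norm x) k) })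

/-- A sequence of rationals is Cauchy. -/
def IsCauchy (x : ℕ → ℚ) : Prop :=
  ∀ ε : ℚ, 0 < ε → ∃ N : ℕ, ∀ m n : ℕ, N ≤ m → N ≤ n → |x m - x n| < ε

/-- The upper limit `inf { sup {f k : k ≥ n} : n ∈ ℕ }` of a sequence in `𝓡`. -/
noncomputable def upperLimit (f : ℕ → DecimalRep) : DecimalRep :=
  inf { z | ∃ n : ℕ, z = sup { w | ∃ k : ℕ, n ≤ k ∧ w = f k } }

/-- The lower limit `sup { inf {f k : k ≥ n} : n ∈ ℕ }` of a sequence in `𝓡`. -/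
noncomputable def lowerLimit (f : ℕ → DecimalRep) : DecimalRep :=
  sup { z | ∃ n : ℕ, z = inf { w | ∃ k : ℕ, n ≤ k ∧ w = f k } }

end DecimalRep

/-!
A decimal representation `x` denotes a real number `val x`. If `x ≺ z ≺ y`, then `val x < val y`:
passing from `x` to `z` raises some truncation by a full unit `10⁻ⁿ` in its last place, so
`val x ≤ [z]_n`; likewise `[z]_m + 10⁻ᵐ ≤ val y` for some `m`; and the truncations of the single
representation `z` satisfy `[z]_n < [z]_m + 10⁻ᵐ`. Hence representations of the same real number
have no gap. Since suprema in `(𝓡, ⪯)` are computed by suprema of values, `⊕` is carried to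
addition in `ℝ`, which is associative.
-/

namespace DecimalRep

open Filter Topology

/-- The integer `10 ^ k * [x]_k` spelled by the integer part and the first `k` digits of `x`. It is
used to reason about truncations by integer arithmetic. -/
def scaledTrunc (x : DecimalRep) : ℕ → ℤ
  | 0 => x.1
  | k + 1 => 10 * scaledTrunc x k + (x.2 k : ℕ)

/-- The decimal representation whose `k`-th scaled truncation is `N k`, provided that each `N k` is
`N (k + 1)` with its last digit deleted. Decimal expansions and least upper bounds are built this
way. -/
def ofScaledTrunc (N : ℕ → ℤ) : DecimalRep :=
  (N 0, fun k ↦ ⟨(N (k + 1) % 10).toNat, by omega⟩)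

/-- The real number denoted by a decimal representation, through which `equiv` and `add` are reduced
to equality and addition in `ℝ`. -/
noncomputable def val (x : DecimalRep) : ℝ := x.1 + Real.ofDigits x.2

lemma trunc_succ (x : DecimalRep) (k : ℕ) :
    trunc x (k + 1) = trunc x k + (x.2 k : ℕ) / 10 ^ (k + 1) := by
  simp [trunc, Finset.sum_range_succ, add_assoc]

lemma trunc_eq_scaledTrunc_div (x : DecimalRep) (k : ℕ) :
    trunc x k = scaledTrunc x k / 10 ^ k := by
  induction k with
  | zero => simp [trunc, scaledTrunc]
  | succ k ih =>
    rw [trunc_succ, ih, scaledTrunc]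
    push_cast
    field

lemma scaledTrunc_succ_ediv (x : DecimalRep) (k : ℕ) :
    scaledTrunc x (k + 1) / 10 = scaledTrunc x k := by
  rw [scaledTrunc]
  omega

lemma scaledTrunc_injective : Function.Injective scaledTrunc := by
  intro x y h
  have hdigit (k : ℕ) : x.2 k = y.2 k := by
    have hk := congrFun h k
    have hk' := congrFun h (k + 1)
    simp only [scaledTrunc] at hk'
    omega
  exact Prod.ext (congrFun h 0) (funext hdigit)

lemma scaledTrunc_ofScaledTrunc {N : ℕ → ℤ} (hN : ∀ k, N (k + 1) / 10 = N k) :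
    scaledTrunc (ofScaledTrunc N) = N := by
  funext k
  induction k with
  | zero => rfl
  | succ k ih =>
    have hk := hN k
    rw [scaledTrunc, ih]
    simp only [ofScaledTrunc]
    omega

lemma scaledTrunc_iota (α : ℚ) (k : ℕ) : scaledTrunc (iota α) k = ⌊α * 10 ^ k⌋ := by
  have hiota : iota α = ofScaledTrunc fun k ↦ ⌊α * 10 ^ k⌋ := by simp [iota, ofScaledTrunc]
  have hdrop (k : ℕ) : ⌊α * 10 ^ (k + 1)⌋ / 10 = ⌊α * 10 ^ k⌋ := by
    have hdiv : α * 10 ^ (k + 1) / (10 : ℕ) = α * 10 ^ k := by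
      push_cast
      field
    exact_mod_cast hdiv ▸ (Int.floor_div_natCast (α * 10 ^ (k + 1)) 10).symm
  rw [hiota, scaledTrunc_ofScaledTrunc hdrop]

lemma trunc_le_trunc_iff {x y : DecimalRep} {k : ℕ} :
    trunc x k ≤ trunc y k ↔ scaledTrunc x k ≤ scaledTrunc y k := by
  rw [trunc_eq_scaledTrunc_div, trunc_eq_scaledTrunc_div,
    div_le_div_iff_of_pos_right (by positivity), Int.cast_le]

lemma le_iff_scaledTrunc_le {x y : DecimalRep} : le x y ↔ scaledTrunc x ≤ scaledTrunc y :=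
  forall_congr' fun _ ↦ trunc_le_trunc_iff

protected lemma le_antisymm {x y : DecimalRep} (hxy : le x y) (hyx : le y x) : x = y :=
  scaledTrunc_injective <|
    le_antisymm (le_iff_scaledTrunc_le.1 hxy) (le_iff_scaledTrunc_le.1 hyx)

lemma iota_le_iota {α β : ℚ} (h : α ≤ β) : le (iota α) (iota β) := by
  refine le_iff_scaledTrunc_le.2 fun k ↦ ?_
  rw [scaledTrunc_iota, scaledTrunc_iota]
  gcongr

lemma trunc_monotone (x : DecimalRep) : Monotone (trunc x) := by
  refine monotone_nat_of_le_succ fun k ↦ ?_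
  rw [trunc_succ]
  exact le_add_of_nonneg_right (by positivity)

lemma trunc_add_antitone (x : DecimalRep) : Antitone fun k ↦ trunc x k + 1 / 10 ^ k := by
  refine antitone_nat_of_succ_le fun k ↦ ?_
  have hdigit : ((x.2 k : ℕ) : ℚ) ≤ 9 := by exact_mod_cast Nat.lt_succ_iff.1 (x.2 k).isLt
  calc trunc x (k + 1) + 1 / 10 ^ (k + 1)
      = trunc x k + (x.2 k : ℕ) / 10 ^ (k + 1) + 1 / 10 ^ (k + 1) := by rw [trunc_succ]
    _ ≤ trunc x k + 9 / 10 ^ (k + 1) + 1 / 10 ^ (k + 1) := by gcongr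
    _ = trunc x k + 1 / 10 ^ k := by field

lemma trunc_lt_trunc_add (x : DecimalRep) (m n : ℕ) : trunc x m < trunc x n + 1 / 10 ^ n :=
  calc trunc x m ≤ trunc x (max m n) := trunc_monotone x (le_max_left m n)
    _ < trunc x (max m n) + 1 / 10 ^ max m n := lt_add_of_pos_right _ (by positivity)
    _ ≤ trunc x n + 1 / 10 ^ n := trunc_add_antitone x (le_max_right m n)

lemma exists_trunc_add_le_trunc_of_lt {x y : DecimalRep} (h : lt x y) :
    ∃ n, trunc x n + 1 / 10 ^ n ≤ trunc y n := by
  obtain ⟨n, hn⟩ := Function.ne_iff.1 (scaledTrunc_injective.ne h.2)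
  have hsucc : scaledTrunc x n + 1 ≤ scaledTrunc y n :=
    lt_of_le_of_ne (le_iff_scaledTrunc_le.1 h.1 n) hn
  refine ⟨n, ?_⟩
  rw [trunc_eq_scaledTrunc_div, trunc_eq_scaledTrunc_div, ← add_div]
  gcongr
  exact_mod_cast hsucc

lemma tendsto_trunc (x : DecimalRep) : Tendsto (fun k ↦ (trunc x k : ℝ)) atTop (𝓝 (val x)) := by
  have htrunc (k : ℕ) :
      (trunc x k : ℝ) = x.1 + ∑ i ∈ Finset.range k, Real.ofDigitsTerm x.2 i := by
    simp [trunc, Real.ofDigitsTerm, div_eq_mul_inv]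
  simp only [htrunc]
  exact Real.summable_ofDigitsTerm.hasSum.tendsto_sum_nat.const_add _

lemma trunc_le_val (x : DecimalRep) (k : ℕ) : (trunc x k : ℝ) ≤ val x :=
  (Rat.cast_mono.comp (trunc_monotone x)).ge_of_tendsto (tendsto_trunc x) k

lemma val_le_trunc_add (x : DecimalRep) (k : ℕ) : val x ≤ (trunc x k + 1 / 10 ^ k : ℚ) :=
  le_of_tendsto' (tendsto_trunc x) fun m ↦ Rat.cast_le.2 (trunc_lt_trunc_add x m k).le

lemma val_le_val {x y : DecimalRep} (h : le x y) : val x ≤ val y :=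
  le_of_tendsto_of_tendsto' (tendsto_trunc x) (tendsto_trunc y) fun k ↦ Rat.cast_le.2 (h k)

lemma val_lt_val_of_lt_of_lt {x y z : DecimalRep} (hxz : lt x z) (hzy : lt z y) :
    val x < val y := by
  obtain ⟨n, hn⟩ := exists_trunc_add_le_trunc_of_lt hxz
  obtain ⟨m, hm⟩ := exists_trunc_add_le_trunc_of_lt hzy
  calc val x ≤ (trunc x n + 1 / 10 ^ n : ℚ) := val_le_trunc_add x n
    _ ≤ trunc z n := Rat.cast_le.2 hn
    _ < (trunc z m + 1 / 10 ^ m : ℚ) := Rat.cast_lt.2 (trunc_lt_trunc_add z n m)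
    _ ≤ trunc y m := Rat.cast_le.2 hm
    _ ≤ val y := trunc_le_val y m

lemma equiv_of_val_eq {x y : DecimalRep} (h : val x = val y) : equiv x y := by
  rintro ⟨z, hzx, hzy, ⟨hxz, hzy'⟩ | ⟨hyz, hzx'⟩⟩
  · exact (val_lt_val_of_lt_of_lt ⟨hxz, hzx.symm⟩ ⟨hzy', hzy⟩).ne h
  · exact (val_lt_val_of_lt_of_lt ⟨hyz, hzy.symm⟩ ⟨hzx', hzx⟩).ne' h

lemma val_iota (α : ℚ) : val (iota α) = α := by
  have hlo (k : ℕ) : α - (1 / 10) ^ k ≤ trunc (iota α) k := by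
    rw [trunc_eq_scaledTrunc_div, scaledTrunc_iota, one_div_pow, sub_le_iff_le_add, ← add_div,
      le_div_iff₀ (by positivity)]
    exact (Int.lt_floor_add_one _).le
  have hhi (k : ℕ) : trunc (iota α) k ≤ α := by
    rw [trunc_eq_scaledTrunc_div, scaledTrunc_iota, div_le_iff₀ (by positivity)]
    exact Int.floor_le _
  have hlim : Tendsto (fun k : ℕ ↦ α - (1 / 10) ^ k) atTop (𝓝 α) := by
    simpa using (tendsto_pow_atTop_nhds_zero_of_lt_one (r := (1 / 10 : ℚ))
      (by norm_num) (by norm_num)).const_sub α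
  have htrunc : Tendsto (trunc (iota α)) atTop (𝓝 α) :=
    tendsto_of_tendsto_of_tendsto_of_le_of_le hlim tendsto_const_nhds hlo hhi
  exact tendsto_nhds_unique (tendsto_trunc _) ((Rat.continuous_coe_real.tendsto α).comp htrunc)

lemma IsLub.unique {W : Set DecimalRep} {M M' : DecimalRep} (h : IsLub W M) (h' : IsLub W M') :
    M = M' :=
  DecimalRep.le_antisymm (h.2 M' h'.1) (h'.2 M h.1)

lemma isLub_of_isGreatest_scaledTrunc {W : Set DecimalRep} {M : DecimalRep}
    (hM : ∀ k, IsGreatest ((scaledTrunc · k) '' W) (scaledTrunc M k)) : IsLub W M := by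
  refine ⟨fun w hw ↦ le_iff_scaledTrunc_le.2 fun k ↦ (hM k).2 ⟨w, hw, rfl⟩,
    fun M' hM' ↦ le_iff_scaledTrunc_le.2 fun k ↦ ?_⟩
  obtain ⟨w, hw, hwk⟩ := (hM k).1
  exact hwk ▸ le_iff_scaledTrunc_le.1 (hM' w hw) k

lemma exists_isGreatest_scaledTrunc {W : Set DecimalRep} (hne : W.Nonempty)
    (hW : ∃ B, ∀ w ∈ W, le w B) :
    ∃ M, ∀ k, IsGreatest ((scaledTrunc · k) '' W) (scaledTrunc M k) := by
  obtain ⟨B, hB⟩ := hW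
  have hbdd (k : ℕ) : BddAbove ((scaledTrunc · k) '' W) :=
    ⟨scaledTrunc B k, Set.forall_mem_image.2 fun w hw ↦ le_iff_scaledTrunc_le.1 (hB w hw) k⟩
  choose N hN using fun k ↦ (hbdd k).exists_isGreatest_of_nonempty (hne.image _)
  have hdrop (k : ℕ) : N (k + 1) / 10 = N k := by
    have hmono : Monotone fun n : ℤ ↦ n / 10 := fun _ _ h ↦ Int.ediv_le_ediv (by norm_num) h
    have hmax := hmono.map_isGreatest (hN (k + 1))
    simp only [Set.image_image, scaledTrunc_succ_ediv] at hmax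
    exact hmax.unique (hN k)
  exact ⟨ofScaledTrunc N, fun k ↦ by simpa only [scaledTrunc_ofScaledTrunc hdrop] using hN k⟩

lemma isLub_sup {W : Set DecimalRep} (hne : W.Nonempty) (hW : ∃ B, ∀ w ∈ W, le w B) :
    IsLub W (sup W) := by
  have hex : ∃ M, IsLub W M :=
    (exists_isGreatest_scaledTrunc hne hW).imp fun _ ↦ isLub_of_isGreatest_scaledTrunc
  rw [sup, dif_pos hex]
  exact hex.choose_spec

lemma IsLub.isLUB_val {W : Set DecimalRep} {M : DecimalRep} (hM : IsLub W M)
    (hne : W.Nonempty) : IsLUB (val '' W) (val M) := by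
  obtain ⟨M', hmax⟩ := exists_isGreatest_scaledTrunc hne ⟨M, hM.1⟩
  obtain rfl : M' = M := (isLub_of_isGreatest_scaledTrunc hmax).unique hM
  refine ⟨Set.forall_mem_image.2 fun w hw ↦ val_le_val (hM.1 w hw), fun c hc ↦ ?_⟩
  refine le_of_tendsto' (tendsto_trunc M') fun k ↦ ?_
  obtain ⟨w, hw, hwk⟩ := (hmax k).1
  calc (trunc M' k : ℝ) ≤ trunc w k := Rat.cast_le.2 (trunc_le_trunc_iff.2 hwk.ge)
    _ ≤ val w := trunc_le_val w k
    _ ≤ c := hc ⟨w, hw, rfl⟩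

lemma val_sup_range_iota {κ : Type*} [Nonempty κ] {q : κ → ℚ} {v : ℝ}
    (hq : IsLUB (Set.range fun k ↦ (q k : ℝ)) v) :
    val (sup (Set.range fun k ↦ iota (q k))) = v := by
  have hceil (k : κ) : q k ≤ ⌈v⌉ := by
    have hv : (q k : ℝ) ≤ ⌈v⌉ := (hq.1 ⟨k, rfl⟩).trans (Int.le_ceil v)
    exact_mod_cast hv
  have hbdd : ∃ B, ∀ w ∈ Set.range fun k ↦ iota (q k), le w B :=
    ⟨iota ⌈v⌉, Set.forall_mem_range.2 fun k ↦ iota_le_iota (hceil k)⟩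
  have hne : (Set.range fun k ↦ iota (q k)).Nonempty := Set.range_nonempty _
  have hsup := (isLub_sup hne hbdd).isLUB_val hne
  rw [← Set.range_comp] at hsup
  simp only [Function.comp_def, val_iota] at hsup
  exact hsup.unique hq

lemma add_eq_sup_range_iota (x y : DecimalRep) :
    add x y = sup (Set.range fun k ↦ iota (trunc x k + trunc y k)) := by
  simp only [add, Set.range, eq_comm]

lemma val_add (x y : DecimalRep) : val (add x y) = val x + val y := by
  have hmono : Monotone fun k ↦ ((trunc x k + trunc y k : ℚ) : ℝ) :=
    Rat.cast_mono.comp ((trunc_monotone x).add (trunc_monotone y))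
  rw [add_eq_sup_range_iota]
  refine val_sup_range_iota (isLUB_of_tendsto_atTop hmono ?_)
  simpa only [Rat.cast_add] using (tendsto_trunc x).add (tendsto_trunc y)

end DecimalRep

open DecimalRep in
/-- Addition on `𝓡` is associative up to equivalence. -/
theorem add_assoc_equiv (x y z : DecimalRep) :
    equiv (add (add x y) z) (add x (add y z)) := by
  apply equiv_of_val_eq
  simp only [val_add, add_assoc]
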